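/- arXiv:1405.0374 — 3 statements merged into one kernel-verified Lean document; each statement's English description precedes it below -/
import Mathlib

section
/- Let X_1, X_2, ... be independent and identically distributed real-valued random variables with common distribution function F, and let 0 < p < 1. Suppose that ξ_p is the unique solution x of F(x-) ≤ p ≤ F(x), where F(x-) denotes the left limit of F at x. Then the empirical p-th quantile ξ̂_{p,n} computed from the first n observations converges almost surely to ξ_p as n → ∞. -/
open MeasureTheory ProbabilityTheory Filter Topology

/-- The `p`-th quantile of a distribution function `F`: `inf {x | F x ≥ p}`. -/
noncomputable def quantileOf (F : ℝ → ℝ) (p : ℝ) : ℝ := sInf {x | p ≤ F x}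

/-- Empirical distribution function of the first `n` observations of `X`. -/
noncomputable def empCDF {Ω : Type*} (X : ℕ → Ω → ℝ) (n : ℕ) (ω : Ω) (x : ℝ) : ℝ :=
  (n : ℝ)⁻¹ * ∑ j ∈ Finset.range n, if X j ω ≤ x then (1 : ℝ) else 0

/-- Empirical `p`-th quantile computed from the first `n` observations of `X`. -/
noncomputable def empQuantile {Ω : Type*} (X : ℕ → Ω → ℝ) (n : ℕ) (p : ℝ) (ω : Ω) : ℝ :=
  quantileOf (empCDF X n ω) p

/-!
Uniqueness of the `p`-quantile `ξ` of `F` says exactly that `F` passes strictly through the level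
`p` at `ξ`: `F x < p` for `x < ξ` and `p < F x` for `x > ξ`. By the strong law of large numbers, the
empirical distribution functions almost surely converge to `F` at every rational point. For
rationals `a < ξ < b` they are then eventually below `p` at `a` and above `p` at `b`, and being
monotone they have their `p`-quantile in `[a, b]`.
-/

/-- `x` is a `p`-quantile of `F` in the weak sense `F(x-) ≤ p ≤ F(x)`. The points satisfying this
may fill an interval, whereas `quantileOf F p` singles out one value. -/
def IsQuantile {α β : Type*} [LinearOrder α] [LE β] [TopologicalSpace β]
    (F : α → β) (p : β) (x : α) : Prop :=
  Function.leftLim F x ≤ p ∧ p ≤ F x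

section IsQuantile

variable {α β : Type*} [LinearOrder α] [ConditionallyCompleteLinearOrder β] [TopologicalSpace β]
  [OrderTopology β] {F : α → β} {p : β} {ξ x : α}

lemma IsQuantile.lt_of_lt_of_unique (hξ : IsQuantile F p ξ) (hF : Monotone F)
    (huniq : ∀ y, IsQuantile F p y → y = ξ) (hx : x < ξ) : F x < p := by
  by_contra! hpx
  have hleft : Function.leftLim F x ≤ p :=
    (hF.leftLim_le le_rfl).trans ((hF.le_leftLim hx).trans hξ.1)
  exact hx.ne (huniq x ⟨hleft, hpx⟩)

lemma IsQuantile.lt_of_gt_of_unique (hξ : IsQuantile F p ξ) (hF : Monotone F)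
    (huniq : ∀ y, IsQuantile F p y → y = ξ) (hx : ξ < x) : p < F x := by
  by_contra! hxp
  have hleft : Function.leftLim F x ≤ p := (hF.leftLim_le le_rfl).trans hxp
  exact hx.ne' (huniq x ⟨hleft, hξ.2.trans (hF hx.le)⟩)

end IsQuantile

section QuantileOf

variable {p ξ : ℝ}

lemma quantileOf_mem_Icc {G : ℝ → ℝ} {a b : ℝ} (hG : Monotone G) (ha : G a < p) (hb : p ≤ G b) :
    quantileOf G p ∈ Set.Icc a b := by
  have hlower : a ∈ lowerBounds {x | p ≤ G x} := fun x hx ↦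
    (hG.reflect_lt (ha.trans_le hx)).le
  exact ⟨le_csInf ⟨b, hb⟩ hlower, csInf_le ⟨a, hlower⟩ hb⟩

lemma tendsto_quantileOf_of_dense {ι : Type*} {l : Filter ι} {G : ι → ℝ → ℝ} {F : ℝ → ℝ}
    {D : Set ℝ} (hD : Dense D) (hG : ∀ i, Monotone (G i))
    (hlim : ∀ x ∈ D, Tendsto (fun i ↦ G i x) l (𝓝 (F x)))
    (hlt : ∀ x < ξ, F x < p) (hgt : ∀ x > ξ, p < F x) :
    Tendsto (fun i ↦ quantileOf (G i) p) l (𝓝 ξ) := by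
  refine (nhds_basis_Ioo ξ).tendsto_right_iff.2 fun ⟨c, d⟩ ⟨hc, hd⟩ ↦ ?_
  obtain ⟨a, haD, hca, haξ⟩ := hD.exists_between hc
  obtain ⟨b, hbD, hξb, hbd⟩ := hD.exists_between hd
  filter_upwards [(hlim a haD).eventually_lt_const (hlt a haξ),
    (hlim b hbD).eventually_const_lt (hgt b hξb)] with i hia hib
  exact Set.Icc_subset_Ioo hca hbd (quantileOf_mem_Icc (hG i) hia hib.le)

end QuantileOf

lemma monotone_empCDF {Ω : Type*} (X : ℕ → Ω → ℝ) (n : ℕ) (ω : Ω) : Monotone (empCDF X n ω) := by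
  intro x y hxy
  unfold empCDF
  gcongr with j
  split_ifs with hx hy
  exacts [le_rfl, absurd (hx.trans hxy) hy, zero_le_one, le_rfl]

section StrongLaw

open Function

variable {Ω : Type*} [MeasurableSpace Ω] {P : Measure Ω} [IsFiniteMeasure P]

lemma monotone_measureReal_le {β : Type*} [Preorder β] {X : Ω → β} :
    Monotone fun x ↦ P.real {ω | X ω ≤ x} :=
  fun _ _ hxy ↦ measureReal_mono fun _ hω ↦ le_trans hω hxy

lemma ae_tendsto_frequency {E : Type*} [MeasurableSpace E] {X : ℕ → Ω → E} {s : Set E}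
    (hs : MeasurableSet s) (hindep : Pairwise ((· ⟂ᵢ[P] ·) on X))
    (hident : ∀ i, IdentDistrib (X i) (X 0) P P) :
    ∀ᵐ ω ∂P, Tendsto
      (fun n : ℕ ↦ (n : ℝ)⁻¹ * ∑ j ∈ Finset.range n, s.indicator (1 : E → ℝ) (X j ω))
      atTop (𝓝 (P.real (X 0 ⁻¹' s))) := by
  have hmeas : Measurable (s.indicator (1 : E → ℝ)) := measurable_one.indicator hs
  have hnull : NullMeasurableSet (X 0 ⁻¹' s) P := (hident 0).aemeasurable_fst.nullMeasurable hs
  have hcomp : s.indicator (1 : E → ℝ) ∘ X 0 = (X 0 ⁻¹' s).indicator fun _ ↦ 1 := rfl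
  have hint : Integrable (s.indicator (1 : E → ℝ) ∘ X 0) P :=
    hcomp ▸ (integrable_const 1).indicator₀ hnull
  have hmean : ∫ ω, (s.indicator (1 : E → ℝ) ∘ X 0) ω ∂P = P.real (X 0 ⁻¹' s) := by
    rw [hcomp, integral_indicator₀ hnull, setIntegral_const, smul_eq_mul, mul_one]
  rw [← hmean]
  exact strong_law_ae (fun j ↦ s.indicator 1 ∘ X j) hint
    (fun _ _ hij ↦ (hindep hij).comp hmeas hmeas) fun j ↦ (hident j).comp hmeas

lemma ae_tendsto_empCDF {X : ℕ → Ω → ℝ} (hindep : Pairwise ((· ⟂ᵢ[P] ·) on X))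
    (hident : ∀ i, IdentDistrib (X i) (X 0) P P) (x : ℝ) :
    ∀ᵐ ω ∂P, Tendsto (fun n ↦ empCDF X n ω x) atTop (𝓝 (P.real {ω | X 0 ω ≤ x})) := by
  simpa only [empCDF, Set.indicator_apply, Set.mem_Iic, Pi.one_apply]
    using! ae_tendsto_frequency measurableSet_Iic hindep hident

theorem empQuantile_strong_consistency_general {X : ℕ → Ω → ℝ}
    (hindep : Pairwise ((· ⟂ᵢ[P] ·) on X)) (hident : ∀ i, IdentDistrib (X i) (X 0) P P)
    {F : ℝ → ℝ} (hF : ∀ x, F x = P.real {ω | X 0 ω ≤ x}) {p ξ : ℝ}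
    (hξ : IsQuantile F p ξ) (huniq : ∀ x, IsQuantile F p x → x = ξ) :
    ∀ᵐ ω ∂P, Tendsto (fun n ↦ empQuantile X n p ω) atTop (𝓝 ξ) := by
  have hmono : Monotone F := funext hF ▸ monotone_measureReal_le
  have hlim : ∀ᵐ ω ∂P, ∀ q : ℚ, Tendsto (fun n ↦ empCDF X n ω q) atTop (𝓝 (F q)) :=
    ae_all_iff.2 fun q ↦ hF q ▸ ae_tendsto_empCDF hindep hident q
  filter_upwards [hlim] with ω hω
  exact tendsto_quantileOf_of_dense Rat.denseRange_cast (fun n ↦ monotone_empCDF X n ω)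
    (Set.forall_mem_range.2 hω) (fun _ ↦ hξ.lt_of_lt_of_unique hmono huniq)
    fun _ ↦ hξ.lt_of_gt_of_unique hmono huniq

end StrongLaw

/-- Strong consistency of the empirical quantile (Serfling, Theorem 2.3.1). -/
theorem empQuantile_strong_consistency
    {Ω : Type*} [MeasurableSpace Ω] (P : Measure Ω) [IsProbabilityMeasure P]
    (X : ℕ → Ω → ℝ) (hmeas : ∀ i, Measurable (X i))
    (hindep : iIndepFun X P)
    (hident : ∀ i, IdentDistrib (X i) (X 0) P P)
    (F : ℝ → ℝ) (hF : ∀ x, F x = (P {ω | X 0 ω ≤ x}).toReal)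
    (p : ℝ) (hp0 : 0 < p) (hp1 : p < 1)
    (ξ : ℝ) (hξ : Function.leftLim F ξ ≤ p ∧ p ≤ F ξ)
    (huniq : ∀ x, Function.leftLim F x ≤ p → p ≤ F x → x = ξ) :
    ∀ᵐ ω ∂P, Tendsto (fun n => empQuantile X n p ω) atTop (𝓝 ξ) :=
  empQuantile_strong_consistency_general (fun _ _ hij ↦ hindep.indepFun hij) hident hF hξ
    fun x hx ↦ huniq x hx.1 hx.2
end

section
/- Let X_1, X_2, ... be independent and identically distributed real-valued random variables with common distribution function F, and let 0 < p < 1. Suppose F possesses a density f in a neighbourhood of ξ_p with f positive and continuous at ξ_p. Then √n (ξ̂_{p,n} − ξ_p) converges in distribution, as n → ∞, to a centered Gaussian distribution with variance p(1−p)/f(ξ_p)². -/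
open MeasureTheory ProbabilityTheory Filter Topology

/-!
The quantile of a distribution function is at most `x` exactly when the distribution function is at
least `p` at `x`. Hence `√n (ξ̂ - ξ) ≤ t` is the event `F̂ (ξ + t / √n) ≥ p`, that is,
`√n (F̂ ξ - p) + √n (F̂ (ξ + t / √n) - F̂ ξ) ≥ 0`. By the central limit theorem the first summand
tends to a centered Gaussian of variance `p (1 - p)`. The second one has mean tending to `t f(ξ)`
and variance at most `|F (ξ + t / √n) - F ξ|`, which tends to `0`, so by Chebyshev it tends to
`t f(ξ)` in probability. Slutsky's theorem and the symmetry of the Gaussian then give the limit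
distribution function, and pointwise convergence of distribution functions implies convergence in
law.
-/

section

variable {Ω : Type*} {mΩ : MeasurableSpace Ω} {P : Measure Ω}

section CdfConvergence

lemma cdf_map_apply [IsProbabilityMeasure P] {Y : Ω → ℝ} (hY : AEMeasurable Y P) (x : ℝ) :
    cdf (P.map Y) x = P.real {ω | Y ω ≤ x} := by
  have := Measure.isProbabilityMeasure_map hY
  rw [cdf_eq_real, map_measureReal_apply_of_aemeasurable hY measurableSet_Iic]
  rfl

lemma measure_Ioc_eq_ofReal_cdf_sub (μ : Measure ℝ) [IsProbabilityMeasure μ] (a b : ℝ) :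
    μ (Set.Ioc a b) = ENNReal.ofReal (cdf μ b - cdf μ a) := by
  conv_lhs => rw [← measure_cdf μ, StieltjesFunction.measure_Ioc]

lemma tendsto_probabilityMeasure_of_tendsto_cdf {ι : Type*} {l : Filter ι}
    [l.IsCountablyGenerated] {μs : ι → ProbabilityMeasure ℝ} {μ : ProbabilityMeasure ℝ}
    {D : Set ℝ} (hD : Dense D)
    (h : ∀ t ∈ D, Tendsto (fun i => cdf (μs i) t) l (𝓝 (cdf μ t))) :
    Tendsto μs l (𝓝 μ) := by
  refine (isPiSystem_Ioc_mem D D).tendsto_probabilityMeasure_of_tendsto_of_mem ?_ ?_ ?_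
  · rintro s ⟨a, -, b, -, -, rfl⟩
    exact measurableSet_Ioc
  · intro u hu x hx
    obtain ⟨a, b, ⟨hax, hxb⟩, hab⟩ := mem_nhds_iff_exists_Ioo_subset.1 (hu.mem_nhds hx)
    obtain ⟨a', ha', haa', ha'x⟩ := hD.exists_between hax
    obtain ⟨b', hb', hxb', hb'b⟩ := hD.exists_between hxb
    exact ⟨Set.Ioc a' b', ⟨a', ha', b', hb', ha'x.trans hxb', rfl⟩, Ioc_mem_nhds ha'x hxb',
      (Set.Ioc_subset_Ioo_right hb'b |>.trans (Set.Ioo_subset_Ioo_left haa'.le)).trans hab⟩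
  · rintro s ⟨a, ha, b, hb, -, rfl⟩
    refine (ENNReal.tendsto_toNNReal (measure_ne_top _ _)).comp ?_
    simp only [measure_Ioc_eq_ofReal_cdf_sub]
    exact ENNReal.tendsto_ofReal ((h b hb).sub (h a ha))

variable {ι Ω' : Type*} {Ωs : ι → Type*} {m : ∀ i, MeasurableSpace (Ωs i)}
  {μ : (i : ι) → Measure (Ωs i)} [∀ i, IsProbabilityMeasure (μ i)]
  {m' : MeasurableSpace Ω'} {μ' : Measure Ω'} [IsProbabilityMeasure μ']
  {T : (i : ι) → Ωs i → ℝ} {Z : Ω' → ℝ} {l : Filter ι}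

lemma tendstoInDistribution_of_tendsto_measureReal_le [l.IsCountablyGenerated]
    (hT : ∀ i, AEMeasurable (T i) (μ i)) (hZ : AEMeasurable Z μ')
    (h : ∀ t, Tendsto (fun i => (μ i).real {ω | T i ω ≤ t}) l (𝓝 (μ'.real {ω | Z ω ≤ t}))) :
    TendstoInDistribution T l Z μ μ' where
  forall_aemeasurable := hT
  tendsto := tendsto_probabilityMeasure_of_tendsto_cdf dense_univ fun t _ => by
    simpa only [ProbabilityMeasure.coe_mk, cdf_map_apply, hT, hZ] using h t

lemma tendsto_measureReal_ge_of_tendstoInDistribution (h : TendstoInDistribution T l Z μ μ')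
    {a : ℝ} (ha : μ' {ω | Z ω = a} = 0) :
    Tendsto (fun i => (μ i).real {ω | a ≤ T i ω}) l (𝓝 (μ'.real {ω | a ≤ Z ω})) := by
  have hfrontier : μ'.map Z (frontier (Set.Ici a)) = 0 := by
    rw [frontier_Ici, Measure.map_apply_of_aemeasurable h.aemeasurable_limit (.singleton a)]
    exact ha
  have hlim := ProbabilityMeasure.tendsto_measure_of_null_frontier_of_tendsto' h.tendsto hfrontier
  have := Measure.isProbabilityMeasure_map h.aemeasurable_limit
  have hlim' := (ENNReal.tendsto_toReal (measure_ne_top (μ'.map Z) _)).comp hlim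
  simpa only [Function.comp_def, ProbabilityMeasure.coe_mk, measurableSet_Ici,
    Measure.map_apply_of_aemeasurable, h.forall_aemeasurable, h.aemeasurable_limit] using! hlim'

lemma tendsto_integral_of_tendstoInDistribution (h : TendstoInDistribution T l Z μ μ')
    (g : BoundedContinuousFunction ℝ ℝ) :
    Tendsto (fun i => ∫ ω, g (T i ω) ∂(μ i)) l (𝓝 (∫ ω, g (Z ω) ∂μ')) := by
  have hlim := ProbabilityMeasure.tendsto_iff_forall_integral_tendsto.1 h.tendsto g
  simpa only [ProbabilityMeasure.coe_mk, integral_map (h.forall_aemeasurable _)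
    g.continuous.aestronglyMeasurable, integral_map h.aemeasurable_limit
    g.continuous.aestronglyMeasurable] using hlim

end CdfConvergence

section Quantile

variable {μ : Measure ℝ} {p : ℝ}

lemma quantileOf_cdf_le_iff (hp0 : 0 < p) (hp1 : p < 1) {x : ℝ} :
    quantileOf (cdf μ) p ≤ x ↔ p ≤ cdf μ x := by
  have hne : {y | p ≤ cdf μ y}.Nonempty :=
    ((tendsto_cdf_atTop μ).eventually (eventually_ge_nhds hp1)).exists
  have hbdd : BddBelow {y | p ≤ cdf μ y} := by
    obtain ⟨z, hz⟩ := ((tendsto_cdf_atBot μ).eventually (eventually_lt_nhds hp0)).exists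
    exact ⟨z, fun y hy => le_of_lt ((monotone_cdf μ).reflect_lt (hz.trans_le hy))⟩
  refine ⟨fun hx => ?_, fun hx => csInf_le hbdd hx⟩
  refine ge_of_tendsto (((cdf μ).right_continuous x).mono Set.Ioi_subset_Ici_self).tendsto ?_
  filter_upwards [self_mem_nhdsWithin] with b hb
  obtain ⟨y, hy, hyb⟩ := exists_lt_of_csInf_lt hne (lt_of_le_of_lt hx hb)
  exact le_trans hy (monotone_cdf μ hyb.le)

lemma le_cdf_quantileOf_cdf (hp0 : 0 < p) (hp1 : p < 1) : p ≤ cdf μ (quantileOf (cdf μ) p) :=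
  (quantileOf_cdf_le_iff hp0 hp1).1 le_rfl

lemma cdf_quantileOf_cdf (hp0 : 0 < p) (hp1 : p < 1)
    (hcont : ContinuousAt (cdf μ) (quantileOf (cdf μ) p)) :
    cdf μ (quantileOf (cdf μ) p) = p := by
  refine le_antisymm ?_ (le_cdf_quantileOf_cdf hp0 hp1)
  have hleft : Tendsto (cdf μ) (𝓝[<] quantileOf (cdf μ) p) (𝓝 (cdf μ (quantileOf (cdf μ) p))) :=
    hcont.tendsto.mono_left nhdsWithin_le_nhds
  refine le_of_tendsto hleft ?_
  filter_upwards [self_mem_nhdsWithin] with x hx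
  exact le_of_not_ge fun hpx => absurd ((quantileOf_cdf_le_iff hp0 hp1).2 hpx) (not_le.2 hx)

end Quantile

section Density

variable {E : Type*} [NormedAddCommGroup E] [NormedSpace ℝ E] [CompleteSpace E]

lemma hasDerivAt_integral_Iic {f : ℝ → E} {x y : ℝ} (hf : IntegrableOn f (Set.Iic y))
    (hxy : x < y) (hfx : ContinuousAt f x) :
    HasDerivAt (fun u => ∫ s in Set.Iic u, f s) (f x) x := by
  have hint : ∀ u ≤ y, IntegrableOn f (Set.Iic u) := fun u hu =>
    hf.mono_set (Set.Iic_subset_Iic.2 hu)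
  have hder : HasDerivAt (fun u => ∫ s in x..u, f s) (f x) x :=
    intervalIntegral.integral_hasDerivAt_right IntervalIntegrable.refl
      ⟨Set.Iic y, Iic_mem_nhds hxy, hf.aestronglyMeasurable⟩ hfx
  refine (hder.const_add (∫ s in Set.Iic x, f s)).congr_of_eventuallyEq ?_
  filter_upwards [Iic_mem_nhds hxy] with u hu
  rw [← intervalIntegral.integral_Iic_sub_Iic (hint x hxy.le) (hint u hu), add_sub_cancel]

-- Bochner integrals of non-integrable functions are `0`, so `F ≠ 0` forces `f` to be integrable.
lemma hasDerivAt_of_eventually_eq_integral_Iic {F f : ℝ → E} {x : ℝ}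
    (hF : ∀ᶠ y in 𝓝 x, F y = ∫ s in Set.Iic y, f s) (hF0 : ∃ᶠ y in 𝓝[>] x, F y ≠ 0)
    (hfx : ContinuousAt f x) :
    HasDerivAt F (f x) x := by
  obtain ⟨y, hFy0, hFy, hxy⟩ := (hF0.and_eventually
    ((hF.filter_mono nhdsWithin_le_nhds).and self_mem_nhdsWithin)).exists
  have hint : IntegrableOn f (Set.Iic y) := .of_integral_ne_zero (hFy ▸ hFy0)
  exact (hasDerivAt_integral_Iic hint hxy hfx).congr_of_eventuallyEq hF

lemma hasDerivAt_cdf_of_eventually_eq_integral_Iic {μ : Measure ℝ} {f : ℝ → ℝ} {x : ℝ}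
    (hpos : 0 < cdf μ x) (hdens : ∀ᶠ y in 𝓝 x, cdf μ y = ∫ s in Set.Iic y, f s)
    (hfx : ContinuousAt f x) :
    HasDerivAt (cdf μ) (f x) x := by
  refine hasDerivAt_of_eventually_eq_integral_Iic hdens (Eventually.frequently ?_) hfx
  filter_upwards [self_mem_nhdsWithin] with y hy
  exact (hpos.trans_le (monotone_cdf μ (le_of_lt hy))).ne'

end Density

section EmpiricalMeasure

/-- The empirical measure of the first `n` observations: the law that `empCDF X n ω` is the
distribution function of. It is the zero measure for `n = 0`. -/
noncomputable def empMeasure (X : ℕ → Ω → ℝ) (n : ℕ) (ω : Ω) : Measure ℝ :=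
  (n : ENNReal)⁻¹ • ∑ j ∈ Finset.range n, Measure.dirac (X j ω)

variable {X : ℕ → Ω → ℝ} {n : ℕ} {p : ℝ}

lemma isProbabilityMeasure_empMeasure (hn : n ≠ 0) (ω : Ω) :
    IsProbabilityMeasure (empMeasure X n ω) := by
  constructor
  simp [empMeasure, ENNReal.inv_mul_cancel, hn]

lemma empCDF_eq_sum_indicator (ω : Ω) (x : ℝ) :
    empCDF X n ω x =
      (n : ℝ)⁻¹ * ∑ j ∈ Finset.range n, (Set.Iic x).indicator (1 : ℝ → ℝ) (X j ω) := by
  simp [empCDF, Set.indicator_apply]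

lemma cdf_empMeasure (hn : n ≠ 0) (ω : Ω) : cdf (empMeasure X n ω) = empCDF X n ω := by
  have := isProbabilityMeasure_empMeasure (X := X) hn ω
  ext x
  rw [cdf_eq_real, empCDF_eq_sum_indicator]
  simp [empMeasure, measureReal_def, Set.indicator_apply]

lemma empQuantile_le_iff (hn : n ≠ 0) (hp0 : 0 < p) (hp1 : p < 1) (ω : Ω) (x : ℝ) :
    empQuantile X n p ω ≤ x ↔ p ≤ empCDF X n ω x := by
  rw [empQuantile, ← cdf_empMeasure hn, quantileOf_cdf_le_iff hp0 hp1]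

lemma aemeasurable_empCDF (hX : ∀ i, AEMeasurable (X i) P) (n : ℕ) (x : ℝ) :
    AEMeasurable (fun ω => empCDF X n ω x) P := by
  simp only [empCDF_eq_sum_indicator]
  have hind : Measurable ((Set.Iic x).indicator (1 : ℝ → ℝ)) :=
    measurable_one.indicator measurableSet_Iic
  fun_prop

lemma aemeasurable_empQuantile (hX : ∀ i, AEMeasurable (X i) P) (hp0 : 0 < p) (hp1 : p < 1)
    (n : ℕ) : AEMeasurable (empQuantile X n p) P := by
  rcases eq_or_ne n 0 with rfl | hn
  · have hzero : ∀ ω, empCDF X 0 ω = 0 := fun ω => by ext; simp [empCDF]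
    exact (aemeasurable_const (b := quantileOf 0 p)).congr
      (.of_forall fun ω => by rw [empQuantile, hzero])
  · have hpre : ∀ x, NullMeasurableSet (empQuantile X n p ⁻¹' Set.Iic x) P := fun x => by
      simp only [Set.preimage, Set.mem_Iic, empQuantile_le_iff hn hp0 hp1]
      exact nullMeasurableSet_le aemeasurable_const (aemeasurable_empCDF hX n x)
    exact NullMeasurable.aemeasurable (measurable_of_Iic (δ := NullMeasurableSpace Ω P) hpre)

end EmpiricalMeasure

section Moments

lemma memLp_indicator_one [IsFiniteMeasure P] {s : Set Ω} (hs : MeasurableSet s) (q : ENNReal) :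
    MemLp (s.indicator (1 : Ω → ℝ)) q P :=
  (memLp_const (1 : ℝ)).indicator hs

lemma variance_indicator_one [IsProbabilityMeasure P] {s : Set Ω} (hs : MeasurableSet s) :
    Var[s.indicator (1 : Ω → ℝ); P] = P.real s * (1 - P.real s) := by
  have hsq : s.indicator (1 : Ω → ℝ) ^ 2 = s.indicator 1 := by
    ext ω
    by_cases hω : ω ∈ s <;> simp [hω]
  rw [variance_eq_sub (memLp_indicator_one hs 2), hsq, integral_indicator_one hs]
  ring

lemma variance_indicator_one_sub_le [IsProbabilityMeasure P] {s t : Set Ω} (hs : MeasurableSet s)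
    (ht : MeasurableSet t) :
    Var[s.indicator (1 : Ω → ℝ) - t.indicator 1; P] ≤ P.real (symmDiff s t) := by
  have hsq : (s.indicator (1 : Ω → ℝ) - t.indicator 1) ^ 2 = (symmDiff s t).indicator 1 := by
    ext ω
    by_cases hωs : ω ∈ s <;> by_cases hωt : ω ∈ t <;> simp [hωs, hωt, Set.mem_symmDiff]
  rw [← integral_indicator_one (hs.symmDiff ht), ← hsq]
  exact variance_le_expectation_sq
    ((memLp_indicator_one hs 2).sub (memLp_indicator_one ht 2)).aestronglyMeasurable

lemma tendstoInMeasure_of_tendsto_integral_of_tendsto_variance {ι : Type*} {l : Filter ι}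
    [IsFiniteMeasure P] {D : ι → Ω → ℝ} {c : ℝ} (hD : ∀ i, MemLp (D i) 2 P)
    (hmean : Tendsto (fun i => P[D i]) l (𝓝 c))
    (hvar : Tendsto (fun i => Var[D i; P]) l (𝓝 0)) :
    TendstoInMeasure P D l fun _ => c := by
  rw [tendstoInMeasure_iff_dist]
  intro ε hε
  have hbound : Tendsto (fun i => ENNReal.ofReal (Var[D i; P] / (ε / 2) ^ 2)) l (𝓝 0) := by
    simpa using ENNReal.tendsto_ofReal (hvar.div_const ((ε / 2) ^ 2))
  refine tendsto_of_tendsto_of_tendsto_of_le_of_le' tendsto_const_nhds hbound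
    (.of_forall fun _ => zero_le) ?_
  filter_upwards [hmean.eventually (Metric.ball_mem_nhds c (half_pos hε))] with i hi
  refine (measure_mono fun ω hω => ?_).trans (meas_ge_le_variance_div_sq (hD i) (half_pos hε))
  have htri := dist_triangle (D i ω) (P[D i]) c
  simp only [Set.mem_ofPred_eq, ← Real.dist_eq] at hω hi ⊢
  linarith

end Moments

section SampleMean

variable {𝓧 : Type*} {m𝓧 : MeasurableSpace 𝓧} {μ : Measure 𝓧} {X : ℕ → Ω → 𝓧} {φ : 𝓧 → ℝ} {n : ℕ}

lemma memLp_comp_of_hasLaw {q : ENNReal} {Y : Ω → 𝓧} (hY : HasLaw Y μ P) (hφ : MemLp φ q μ) :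
    MemLp (φ ∘ Y) q P :=
  .comp_of_map (hY.map_eq.symm ▸ hφ) hY.aemeasurable

lemma memLp_sampleMean {q : ENNReal} (hX : ∀ i, HasLaw (X i) μ P) (hφ : MemLp φ q μ) (n : ℕ) :
    MemLp (fun ω => (n : ℝ)⁻¹ * ∑ j ∈ Finset.range n, φ (X j ω)) q P :=
  (memLp_finsetSum _ fun j _ => memLp_comp_of_hasLaw (hX j) hφ).const_mul _

lemma integral_sampleMean (hn : n ≠ 0) (hX : ∀ i, HasLaw (X i) μ P) (hφ : Integrable φ μ) :
    ∫ ω, (n : ℝ)⁻¹ * ∑ j ∈ Finset.range n, φ (X j ω) ∂P = ∫ x, φ x ∂μ := by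
  have hint : ∀ j, Integrable (fun ω => φ (X j ω)) P := fun j =>
    memLp_one_iff_integrable.1 (memLp_comp_of_hasLaw (hX j) (memLp_one_iff_integrable.2 hφ))
  have hmean : ∀ j, ∫ ω, φ (X j ω) ∂P = ∫ x, φ x ∂μ := fun j =>
    (hX j).integral_comp hφ.aestronglyMeasurable
  rw [integral_const_mul, integral_finsetSum _ fun j _ => hint j]
  simp only [hmean, Finset.sum_const, Finset.card_range, nsmul_eq_mul]
  rw [inv_mul_cancel_left₀ (Nat.cast_ne_zero.2 hn)]

lemma variance_comp_of_hasLaw {Y : Ω → 𝓧} (hY : HasLaw Y μ P) (hφ : AEMeasurable φ μ) :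
    Var[φ ∘ Y; P] = Var[φ; μ] := by
  rw [← hY.map_eq, variance_map (hY.map_eq.symm ▸ hφ) hY.aemeasurable]

lemma variance_sampleMean (hindep : iIndepFun X P) (hX : ∀ i, HasLaw (X i) μ P)
    (hφ : Measurable φ) (hφ2 : MemLp φ 2 μ) (n : ℕ) :
    Var[fun ω => (n : ℝ)⁻¹ * ∑ j ∈ Finset.range n, φ (X j ω); P] = Var[φ; μ] / n := by
  have hsum : Var[∑ j ∈ Finset.range n, φ ∘ X j; P] = n * Var[φ; μ] := by
    rw [IndepFun.variance_sum (fun j _ => memLp_comp_of_hasLaw (hX j) hφ2)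
      fun i _ j _ hij => (hindep.indepFun hij).comp hφ hφ]
    simp only [variance_comp_of_hasLaw (hX _) hφ.aemeasurable, Finset.sum_const,
      Finset.card_range, nsmul_eq_mul]
  rw [variance_const_mul, ← Finset.sum_fn]
  simp only [Function.comp_def] at hsum
  rw [hsum]
  rcases eq_or_ne n 0 with rfl | hn
  · simp
  · field_simp

lemma tendstoInDistribution_sampleMean [IsProbabilityMeasure P] {Ω' : Type*}
    {m' : MeasurableSpace Ω'} {P' : Measure Ω'} [IsProbabilityMeasure P'] {Y : Ω' → ℝ}
    (hY : HasLaw Y (gaussianReal 0 Var[φ; μ].toNNReal) P') (hindep : iIndepFun X P)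
    (hX : ∀ i, HasLaw (X i) μ P) (hφ : Measurable φ) (hφ2 : MemLp φ 2 μ) :
    TendstoInDistribution
      (fun (n : ℕ) ω => √n * ((n : ℝ)⁻¹ * ∑ j ∈ Finset.range n, φ (X j ω) - ∫ x, φ x ∂μ))
      atTop Y (fun _ => P) P' := by
  have hmean : P[φ ∘ X 0] = ∫ x, φ x ∂μ := (hX 0).integral_comp hφ2.aestronglyMeasurable
  rw [← variance_comp_of_hasLaw (hX 0) hφ.aemeasurable] at hY
  convert! tendstoInDistribution_inv_sqrt_mul_sum_sub (X := fun i => φ ∘ X i) hY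
    (memLp_comp_of_hasLaw (hX 0) hφ2) (hindep.comp (fun _ => φ) fun _ => hφ)
    (fun i => ((hX i).identDistrib (hX 0)).comp hφ) using 3 with n ω
  rw [hmean]
  rcases eq_or_ne n 0 with rfl | hn
  · simp
  · have hsq : √(n : ℝ) ^ 2 = n := Real.sq_sqrt n.cast_nonneg
    simp only [Function.comp_apply]
    field_simp
    rw [hsq]

end SampleMean

section EmpiricalProcess

variable {μ : Measure ℝ} {X : ℕ → Ω → ℝ} {n : ℕ}

lemma measureReal_symmDiff_Iic (μ : Measure ℝ) [IsProbabilityMeasure μ] (a b : ℝ) :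
    μ.real (symmDiff (Set.Iic a) (Set.Iic b)) = |cdf μ a - cdf μ b| := by
  wlog hab : a ≤ b generalizing a b
  · rw [symmDiff_comm, abs_sub_comm, this b a (le_of_not_ge hab)]
  have hsub : Set.Iic a ⊆ Set.Iic b := Set.Iic_subset_Iic.2 hab
  rw [symmDiff_of_le hsub, measureReal_sdiff hsub measurableSet_Iic, ← cdf_eq_real, ← cdf_eq_real,
    abs_sub_comm, abs_of_nonneg (sub_nonneg.2 (monotone_cdf μ hab))]

lemma integral_indicator_Iic_one (μ : Measure ℝ) [IsProbabilityMeasure μ] (x : ℝ) :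
    ∫ y, (Set.Iic x).indicator (1 : ℝ → ℝ) y ∂μ = cdf μ x := by
  rw [integral_indicator_one measurableSet_Iic, cdf_eq_real]

lemma memLp_empCDF [IsFiniteMeasure μ] (hX : ∀ i, HasLaw (X i) μ P) (n : ℕ) (x : ℝ)
    (q : ENNReal) : MemLp (fun ω => empCDF X n ω x) q P := by
  simp only [empCDF_eq_sum_indicator]
  exact memLp_sampleMean hX (memLp_indicator_one measurableSet_Iic q) n

lemma integral_empCDF [IsProbabilityMeasure μ] (hn : n ≠ 0) (hX : ∀ i, HasLaw (X i) μ P) (x : ℝ) :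
    ∫ ω, empCDF X n ω x ∂P = cdf μ x := by
  simp only [empCDF_eq_sum_indicator]
  rw [integral_sampleMean hn hX
    ((memLp_indicator_one measurableSet_Iic 1).integrable le_rfl), integral_indicator_Iic_one]

lemma variance_empCDF_sub_le [IsProbabilityMeasure μ] (hindep : iIndepFun X P)
    (hX : ∀ i, HasLaw (X i) μ P) (n : ℕ) (a b : ℝ) :
    Var[fun ω => empCDF X n ω a - empCDF X n ω b; P] ≤ |cdf μ a - cdf μ b| / n := by
  have hmeas : ∀ x, Measurable ((Set.Iic x).indicator (1 : ℝ → ℝ)) := fun x =>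
    measurable_one.indicator measurableSet_Iic
  have hL2 : ∀ x, MemLp ((Set.Iic x).indicator (1 : ℝ → ℝ)) 2 μ := fun x =>
    memLp_indicator_one measurableSet_Iic 2
  have hvar := variance_sampleMean hindep hX ((hmeas a).sub (hmeas b)) ((hL2 a).sub (hL2 b)) n
  simp only [empCDF_eq_sum_indicator, ← mul_sub, ← Finset.sum_sub_distrib]
  refine hvar.trans_le ?_
  gcongr
  exact (variance_indicator_one_sub_le measurableSet_Iic measurableSet_Iic).trans_eq
    (measureReal_symmDiff_Iic μ a b)

lemma tendstoInDistribution_sqrt_mul_empCDF_sub_cdf [IsProbabilityMeasure P]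
    {Ω' : Type*} {m' : MeasurableSpace Ω'} {P' : Measure Ω'} [IsProbabilityMeasure P']
    {Y : Ω' → ℝ} {x : ℝ}
    (hY : HasLaw Y (gaussianReal 0 (cdf μ x * (1 - cdf μ x)).toNNReal) P')
    (hindep : iIndepFun X P) (hX : ∀ i, HasLaw (X i) μ P) :
    TendstoInDistribution (fun (n : ℕ) ω => √n * (empCDF X n ω x - cdf μ x)) atTop Y
      (fun _ => P) P' := by
  have := (hX 0).isProbabilityMeasure_iff.1 ‹_›
  rw [cdf_eq_real, ← variance_indicator_one measurableSet_Iic] at hY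
  simp only [empCDF_eq_sum_indicator, ← integral_indicator_Iic_one]
  exact tendstoInDistribution_sampleMean hY hindep hX (measurable_one.indicator measurableSet_Iic)
    (memLp_indicator_one measurableSet_Iic 2)

lemma tendstoInMeasure_sqrt_mul_empCDF_sub [IsProbabilityMeasure μ] (hindep : iIndepFun X P)
    (hX : ∀ i, HasLaw (X i) μ P) {d x : ℝ} (hd : HasDerivAt (cdf μ) d x) (t : ℝ) :
    TendstoInMeasure P
      (fun (n : ℕ) ω => √n * (empCDF X n ω (x + (√n)⁻¹ * t) - empCDF X n ω x)) atTop
      (fun _ => t * d) := by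
  have := (hX 0).isProbabilityMeasure
  have hsqrt : Tendsto (fun n : ℕ => √(n : ℝ)) atTop atTop :=
    Real.tendsto_sqrt_atTop.comp tendsto_natCast_atTop_atTop
  have hdiff : Tendsto (fun n : ℕ => √n * (cdf μ (x + (√n)⁻¹ * t) - cdf μ x)) atTop
      (𝓝 (t * d)) := by
    simpa [Function.comp_def] using (hd.hasFDerivAt.lim_real t).comp hsqrt
  have hshift : Tendsto (fun n : ℕ => x + (√n)⁻¹ * t) atTop (𝓝 x) := by
    simpa using (hsqrt.inv_tendsto_atTop.mul_const t).const_add x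
  refine tendstoInMeasure_of_tendsto_integral_of_tendsto_variance
    (fun n => ((memLp_empCDF hX n _ 2).sub (memLp_empCDF hX n _ 2)).const_mul _) ?_ ?_
  · refine (tendsto_congr' ?_).2 hdiff
    filter_upwards [eventually_ne_atTop 0] with n hn
    rw [integral_const_mul, integral_sub ((memLp_empCDF hX n _ 1).integrable le_rfl)
      ((memLp_empCDF hX n _ 1).integrable le_rfl), integral_empCDF hn hX, integral_empCDF hn hX]
  · have hcdf : Tendsto (fun n : ℕ => |cdf μ (x + (√n)⁻¹ * t) - cdf μ x|) atTop (𝓝 0) := by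
      simpa using ((hd.continuousAt.tendsto.comp hshift).sub_const (cdf μ x)).abs
    refine squeeze_zero (fun n => variance_nonneg _ _) (fun n => ?_) hcdf
    rw [variance_const_mul, Real.sq_sqrt n.cast_nonneg, mul_comm]
    exact mul_le_of_le_div₀ (abs_nonneg _) n.cast_nonneg (variance_empCDF_sub_le hindep hX n _ _)

end EmpiricalProcess

section AsymptoticNormality

lemma sqrt_mul_empQuantile_sub_le_iff {X : ℕ → Ω → ℝ} {n : ℕ} (hn : n ≠ 0) {p : ℝ} (hp0 : 0 < p)
    (hp1 : p < 1) (ω : Ω) (x t : ℝ) :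
    √n * (empQuantile X n p ω - x) ≤ t ↔
      0 ≤ √n * (empCDF X n ω x - p) +
        √n * (empCDF X n ω (x + (√n)⁻¹ * t) - empCDF X n ω x) := by
  have hsqrt : 0 < √(n : ℝ) := by positivity
  rw [← mul_add, mul_nonneg_iff_of_pos_left hsqrt, sub_add_sub_cancel', sub_nonneg,
    ← empQuantile_le_iff hn hp0 hp1, ← le_div_iff₀' hsqrt, sub_le_iff_le_add', div_eq_inv_mul]

lemma hasLaw_neg_mul_gaussianReal {Ω' : Type*} {m' : MeasurableSpace Ω'} {P' : Measure Ω'}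
    {Z : Ω' → ℝ} {v d : ℝ} (hd : d ≠ 0) (hZ : HasLaw Z (gaussianReal 0 (v / d ^ 2).toNNReal) P') :
    HasLaw (fun ω => -d * Z ω) (gaussianReal 0 v.toNNReal) P' := by
  convert! gaussianReal_const_mul hZ (-d) using 2
  · simp
  · ext
    rw [NNReal.coe_mul, Real.coe_toNNReal', Real.coe_toNNReal', NNReal.coe_mk, neg_sq,
      mul_max_of_nonneg _ _ (sq_nonneg d), mul_zero, mul_div_cancel₀ _ (pow_ne_zero 2 hd)]

theorem empQuantile_asymptotic_normality_general [IsProbabilityMeasure P] {μ : Measure ℝ}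
    {X : ℕ → Ω → ℝ} (hindep : iIndepFun X P) (hlaw : ∀ i, HasLaw (X i) μ P)
    {p : ℝ} (hp0 : 0 < p) (hp1 : p < 1) {d : ℝ} (hd : 0 < d)
    (hderiv : HasDerivAt (cdf μ) d (quantileOf (cdf μ) p))
    {Ω' : Type*} {m' : MeasurableSpace Ω'} {P' : Measure Ω'} [IsProbabilityMeasure P'] {Z : Ω' → ℝ}
    (hZ : HasLaw Z (gaussianReal 0 (p * (1 - p) / d ^ 2).toNNReal) P') :
    TendstoInDistribution (fun (n : ℕ) ω => √n * (empQuantile X n p ω - quantileOf (cdf μ) p))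
      atTop Z (fun _ => P) P' := by
  have := (hlaw 0).isProbabilityMeasure_iff.1 ‹_›
  set ξ := quantileOf (cdf μ) p
  have hX : ∀ i, AEMeasurable (X i) P := fun i => (hlaw i).aemeasurable
  have hFξ : cdf μ ξ = p := cdf_quantileOf_cdf hp0 hp1 hderiv.continuousAt
  -- With `-d * Z` as limit, the event `0 ≤ -d * Z + t * d` is `Z ≤ t`.
  have hclt : TendstoInDistribution (fun (n : ℕ) ω => √n * (empCDF X n ω ξ - p)) atTop
      (fun ω => -d * Z ω) (fun _ => P) P' := by
    have := tendstoInDistribution_sqrt_mul_empCDF_sub_cdf (x := ξ)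
      (by simpa only [hFξ] using hasLaw_neg_mul_gaussianReal hd.ne' hZ) hindep hlaw
    simpa only [hFξ] using this
  refine tendstoInDistribution_of_tendsto_measureReal_le
    (fun n => ((aemeasurable_empQuantile hX hp0 hp1 n).sub_const ξ).const_mul _)
    hZ.aemeasurable fun t => ?_
  have hfactor : ∀ ω, -d * Z ω + t * d = d * (t - Z ω) := fun ω => by ring
  have hatom : P' {ω | -d * Z ω + t * d = 0} = 0 := by
    have := nullSingletonClass_gaussianReal (μ := 0) (v := (p * (1 - p) / d ^ 2).toNNReal)
      (Real.toNNReal_pos.2 (div_pos (mul_pos hp0 (sub_pos.2 hp1)) (pow_pos hd 2))).ne'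
    simp only [hfactor, mul_eq_zero, hd.ne', false_or, sub_eq_zero, eq_comm (a := t)]
    exact (hZ.measure_eq (p := (· = t)) (.singleton t)).trans (measure_singleton t)
  have hsum := hclt.add_of_tendstoInMeasure_const
    (tendstoInMeasure_sqrt_mul_empCDF_sub hindep hlaw hderiv t) fun n =>
      ((aemeasurable_empCDF hX n _).sub (aemeasurable_empCDF hX n _)).const_mul _
  have hlim := tendsto_measureReal_ge_of_tendstoInDistribution hsum hatom
  have hset : {ω | 0 ≤ -d * Z ω + t * d} = {ω | Z ω ≤ t} := by
    simp only [hfactor, mul_nonneg_iff_of_pos_left hd, sub_nonneg]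
  rw [← hset]
  refine hlim.congr' ?_
  filter_upwards [eventually_ne_atTop 0] with n hn
  simp only [sqrt_mul_empQuantile_sub_le_iff hn hp0 hp1, Pi.add_apply]

end AsymptoticNormality

end

/-- Asymptotic normality of the empirical quantile (Serfling, Corollary 2.3.3B):
`√n (ξ̂_{p,n} − ξ_p) →d N(0, p(1−p)/f(ξ_p)²)`.  Convergence in distribution is
expressed via convergence of integrals of bounded continuous test functions. -/
theorem empQuantile_asymptotic_normality
    {Ω : Type*} [MeasurableSpace Ω] (P : Measure Ω) [IsProbabilityMeasure P]
    (X : ℕ → Ω → ℝ) (hmeas : ∀ i, Measurable (X i))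
    (hindep : iIndepFun X P)
    (hident : ∀ i, IdentDistrib (X i) (X 0) P P)
    (F f : ℝ → ℝ) (hF : ∀ x, F x = (P {ω | X 0 ω ≤ x}).toReal)
    (p : ℝ) (hp0 : 0 < p) (hp1 : p < 1)
    (ξ : ℝ) (hξ : ξ = quantileOf F p)
    (hdens : ∃ U ∈ 𝓝 ξ, ∀ x ∈ U, F x = ∫ s in Set.Iic x, f s)
    (hfpos : 0 < f ξ) (hfcont : ContinuousAt f ξ) :
    ∀ g : BoundedContinuousFunction ℝ ℝ,
      Tendsto (fun n : ℕ => ∫ ω, g (Real.sqrt n * (empQuantile X n p ω - ξ)) ∂P) atTop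
        (𝓝 (∫ x, g x ∂(gaussianReal 0 (Real.toNNReal (p * (1 - p) / (f ξ) ^ 2))))) := by
  obtain rfl : F = cdf (P.map (X 0)) :=
    funext fun x => (hF x).trans (cdf_map_apply (hmeas 0).aemeasurable x).symm
  subst hξ
  have hderiv := hasDerivAt_cdf_of_eventually_eq_integral_Iic
    (hp0.trans_le (le_cdf_quantileOf_cdf hp0 hp1)) (eventually_iff_exists_mem.2 hdens) hfcont
  have hlaw : ∀ i, HasLaw (X i) (P.map (X 0)) P := fun i =>
    ⟨(hmeas i).aemeasurable, (hident i).map_eq⟩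
  exact tendsto_integral_of_tendstoInDistribution
    (empQuantile_asymptotic_normality_general hindep hlaw hp0 hp1 hfpos hderiv .id)
end

section
/- Let (ε_t)_{t∈ℤ} be an independent family of identically distributed real-valued random variables, let q ∈ ℕ, let θ_0,...,θ_q be real numbers, and define X_t = Σ_{j=0}^{q} θ_j ε_{t−j}. Fix an integer h ≥ 0, real numbers ξ_i, ξ_j, and set G_h(ξ_i,ξ_j) = P({X_0 ≤ ξ_i} ∩ {X_h ≤ ξ_j}). Define Ĝ_{h,n} = (1/n) Σ_{t=1}^{n} 1{X_t ≤ ξ_i} · 1{X_{t+h} ≤ ξ_j}. Then Ĝ_{h,n} converges in probability to G_h(ξ_i,ξ_j) as n → ∞. -/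
open MeasureTheory ProbabilityTheory Filter Topology

/-!
The indicator `1{X_t ≤ ξᵢ} 1{X_{t+h} ≤ ξⱼ}` depends on the noise only through finitely many
coordinates at fixed offsets from `t`. Hence these indicators are identically distributed, and
those more than `m` apart are independent for some `m`. Along each residue class modulo `m + 1` they
are pairwise independent, so Etemadi's strong law applies there. Recombining the `m + 1` classes
gives almost sure convergence, hence convergence in probability.
-/

section CesaroMeans

/-- The upper limit is the number of `i` with `k * i + r < n`. -/
lemma sum_range_eq_sum_residueClasses {M : Type*} [AddCommMonoid M] {k : ℕ} (hk : 0 < k)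
    (u : ℕ → M) (n : ℕ) :
    ∑ i ∈ Finset.range n, u i =
      ∑ r ∈ Finset.range k, ∑ i ∈ Finset.range ((n + (k - 1 - r)) / k), u (k * i + r) := by
  have mod_mem : ∀ i ∈ Finset.range n, i % k ∈ Finset.range k :=
    fun i _ => Finset.mem_range.2 (Nat.mod_lt i hk)
  rw [← Finset.sum_fiberwise_of_maps_to mod_mem]
  refine Finset.sum_congr rfl fun r hr => ?_
  have hrk : r < k := Finset.mem_range.1 hr
  have lt_count_iff (i : ℕ) : i < (n + (k - 1 - r)) / k ↔ k * i + r < n := by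
    rw [← Nat.succ_le_iff, Nat.le_div_iff_mul_le hk, Nat.succ_mul, mul_comm i k]
    omega
  refine Finset.sum_nbij' (· / k) (k * · + r) ?_ ?_ ?_ ?_ ?_ <;>
    simp only [Finset.mem_filter, Finset.mem_range, lt_count_iff, and_imp]
  · rintro i hi rfl
    rwa [Nat.div_add_mod]
  · intro i hi
    exact ⟨hi, by rw [Nat.mul_add_mod, Nat.mod_eq_of_lt hrk]⟩
  · rintro i - rfl
    exact Nat.div_add_mod i k
  · intro i _
    rw [Nat.mul_add_div hk, Nat.div_eq_of_lt hrk, add_zero]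
  · rintro i - rfl
    rw [Nat.div_add_mod]

variable {E : Type*} [NormedAddCommGroup E] [NormedSpace ℝ E] {u : ℕ → E} {L : E}

lemma tendsto_inv_smul_sum_range_iff_isLittleO :
    Tendsto (fun n : ℕ => (n : ℝ)⁻¹ • ∑ i ∈ Finset.range n, u i) atTop (𝓝 L) ↔
      (fun n : ℕ => ∑ i ∈ Finset.range n, (u i - L)) =o[atTop] (fun n : ℕ => (n : ℝ)) := by
  rw [← Asymptotics.isLittleO_norm_left, Asymptotics.isLittleO_iff_tendsto (by simp),
    tendsto_iff_norm_sub_tendsto_zero]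
  refine tendsto_congr' ((eventually_ne_atTop 0).mono fun n hn => ?_)
  have hn_cast : (n : ℝ) ≠ 0 := Nat.cast_ne_zero.2 hn
  calc ‖(n : ℝ)⁻¹ • ∑ i ∈ Finset.range n, u i - L‖
      = ‖(n : ℝ)⁻¹ • ∑ i ∈ Finset.range n, (u i - L)‖ := by
        rw [Finset.sum_sub_distrib, Finset.sum_const, Finset.card_range, smul_sub,
          ← Nat.cast_smul_eq_nsmul ℝ, inv_smul_smul₀ hn_cast]
    _ = ‖∑ i ∈ Finset.range n, (u i - L)‖ / n := by
        rw [norm_smul, norm_inv, Real.norm_natCast, inv_mul_eq_div]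

lemma tendsto_inv_smul_sum_range_of_residueClasses {k : ℕ} (hk : 0 < k)
    (hu : ∀ r < k, Tendsto (fun n : ℕ => (n : ℝ)⁻¹ • ∑ i ∈ Finset.range n, u (k * i + r))
      atTop (𝓝 L)) :
    Tendsto (fun n : ℕ => (n : ℝ)⁻¹ • ∑ i ∈ Finset.range n, u i) atTop (𝓝 L) := by
  rw [tendsto_inv_smul_sum_range_iff_isLittleO]
  simp_rw [sum_range_eq_sum_residueClasses hk (fun i => u i - L)]
  refine Asymptotics.IsLittleO.fun_sum fun r hr => ?_
  have hrk : r < k := Finset.mem_range.1 hr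
  have count_tendsto : Tendsto (fun n => (n + (k - 1 - r)) / k) atTop atTop :=
    (Nat.tendsto_div_const_atTop hk.ne').comp (tendsto_add_atTop_nat _)
  have count_le (n : ℕ) : (n + (k - 1 - r)) / k ≤ n := by
    rw [← Nat.lt_succ_iff, Nat.div_lt_iff_lt_mul hk, Nat.succ_mul]
    have := Nat.le_mul_of_pos_right n hk
    omega
  have count_isBigO :
      (fun n : ℕ => (((n + (k - 1 - r)) / k : ℕ) : ℝ)) =O[atTop] (fun n : ℕ => (n : ℝ)) :=
    Asymptotics.IsBigO.of_norm_le fun n => by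
      rw [Real.norm_natCast]
      exact_mod_cast count_le n
  exact ((tendsto_inv_smul_sum_range_iff_isLittleO.1 (hu r hrk)).comp_tendsto
    count_tendsto).trans_isBigO count_isBigO

end CesaroMeans

lemma tendsto_measure_lt_abs_sub_of_tendsto_ae {Ω : Type*} [MeasurableSpace Ω] {P : Measure Ω}
    [IsFiniteMeasure P] {f : ℕ → Ω → ℝ} {g : Ω → ℝ} (hf : ∀ n, AEMeasurable (f n) P)
    (hlim : ∀ᵐ ω ∂P, Tendsto (fun n => f n ω) atTop (𝓝 (g ω))) {e : ℝ} (he : 0 < e) :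
    Tendsto (fun n => P {ω | e < |f n ω - g ω|}) atTop (𝓝 0) := by
  have hmeasure := tendstoInMeasure_of_tendsto_ae (fun n => (hf n).aestronglyMeasurable) hlim
  refine tendsto_of_tendsto_of_tendsto_of_le_of_le tendsto_const_nhds
    (tendstoInMeasure_iff_norm.1 hmeasure e he) (fun _ => zero_le) fun n => ?_
  exact measure_mono fun ω (hω : e < |f n ω - g ω|) => hω.le

section MDependence

variable {Ω : Type*} [MeasurableSpace Ω] {P : Measure Ω}

/-- The pairwise form of `m`-dependence of a sequence of random variables: terms whose indices
differ by more than `m` are independent. The usual notion, which asks for independence of the whole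
past from the whole future beyond the gap, is stronger. -/
def PairwiseMDependent {E : Type*} [MeasurableSpace E] (m : ℕ) (Y : ℕ → Ω → E) (P : Measure Ω) :
    Prop :=
  ∀ ⦃s t : ℕ⦄, s + m < t → Y s ⟂ᵢ[P] Y t

theorem PairwiseMDependent.strong_law_ae {E : Type*} [NormedAddCommGroup E] [NormedSpace ℝ E]
    [CompleteSpace E] [MeasurableSpace E] [BorelSpace E] {m : ℕ} {Y : ℕ → Ω → E}
    (hdep : PairwiseMDependent m Y P) (hint : Integrable (Y 0) P)
    (hident : ∀ t, IdentDistrib (Y t) (Y 0) P P) :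
    ∀ᵐ ω ∂P, Tendsto (fun n : ℕ => (n : ℝ)⁻¹ • ∑ t ∈ Finset.range n, Y t ω) atTop
      (𝓝 (∫ ω, Y 0 ω ∂P)) := by
  have residueClass_law (r : ℕ) : ∀ᵐ ω ∂P,
      Tendsto (fun n : ℕ => (n : ℝ)⁻¹ • ∑ i ∈ Finset.range n, Y ((m + 1) * i + r) ω) atTop
        (𝓝 (∫ ω, Y 0 ω ∂P)) := by
    have hident_zero (i : ℕ) := (hident ((m + 1) * i + r)).trans (hident ((m + 1) * 0 + r)).symm
    have hindep_lt {i j : ℕ} (hij : i < j) : Y ((m + 1) * i + r) ⟂ᵢ[P] Y ((m + 1) * j + r) :=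
      hdep (by nlinarith)
    have hindep : Pairwise fun i j => Y ((m + 1) * i + r) ⟂ᵢ[P] Y ((m + 1) * j + r) :=
      fun i j hij => hij.lt_or_gt.elim hindep_lt fun hji => (hindep_lt hji).symm
    rw [← (hident ((m + 1) * 0 + r)).integral_eq]
    exact ProbabilityTheory.strong_law_ae (fun i => Y ((m + 1) * i + r))
      ((hident _).integrable_iff.2 hint) hindep hident_zero
  filter_upwards [ae_all_iff.2 residueClass_law] with ω hω
  exact tendsto_inv_smul_sum_range_of_residueClasses m.succ_pos fun r _ => hω r

end MDependence

section SlidingWindow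

variable {Ω : Type*} [MeasurableSpace Ω] {P : Measure Ω}
  {ι κ κ' S : Type*} [MeasurableSpace S]

lemma identDistrib_reindex_of_iIndepFun [Countable κ] {ε : ι → Ω → S} (hindep : iIndepFun ε P)
    (hident : ∀ i j, IdentDistrib (ε i) (ε j) P P) {σ τ : κ → ι} (hσ : σ.Injective)
    (hτ : τ.Injective) :
    IdentDistrib (fun ω k => ε (σ k) ω) (fun ω k => ε (τ k) ω) P P :=
  IdentDistrib.pi (fun k => hident (σ k) (τ k)) (hindep.precomp hσ) (hindep.precomp hτ)

lemma indepFun_pi_of_disjoint_range [Finite κ] [Finite κ'] {ε : ι → Ω → S}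
    (hindep : iIndepFun ε P) (hmeas : ∀ i, AEMeasurable (ε i) P) {σ : κ → ι} {τ : κ' → ι}
    (hστ : ∀ k l, σ k ≠ τ l) :
    (fun ω k => ε (σ k) ω) ⟂ᵢ[P] (fun ω l => ε (τ l) ω) := by
  classical
  have := Fintype.ofFinite κ
  have := Fintype.ofFinite κ'
  have hdisj : Disjoint (Finset.univ.image σ) (Finset.univ.image τ) := by
    simp [Finset.disjoint_left, eq_comm, hστ]
  exact (hindep.indepFun_finset₀ _ _ hdisj hmeas).comp
    (φ := fun v k => v ⟨σ k, Finset.mem_image_of_mem σ (Finset.mem_univ k)⟩)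
    (ψ := fun v l => v ⟨τ l, Finset.mem_image_of_mem τ (Finset.mem_univ l)⟩)
    (by fun_prop) (by fun_prop)

/-- The configuration of the process `ε` seen at time `t` through the offsets `o k`. -/
def slidingWindow (ε : ℤ → Ω → S) (o : κ → ℤ) (t : ℤ) (ω : Ω) : κ → S :=
  fun k => ε (t + o k) ω

variable {ε : ℤ → Ω → S} (o : κ → ℤ)

lemma identDistrib_slidingWindow (hindep : iIndepFun ε P)
    (hident : ∀ s t, IdentDistrib (ε s) (ε t) P P) (s t : ℤ) :
    IdentDistrib (slidingWindow ε o s) (slidingWindow ε o t) P P :=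
  -- `o` need not be injective, so the whole path is shifted before it is restricted to `o`.
  (identDistrib_reindex_of_iIndepFun hindep hident (add_right_injective s)
    (add_right_injective t)).comp (u := fun (w : ℤ → S) k => w (o k)) (by fun_prop)

lemma exists_pairwiseMDependent_slidingWindow [Finite κ] (hindep : iIndepFun ε P)
    (hmeas : ∀ t, AEMeasurable (ε t) P) (a : ℤ) :
    ∃ m, PairwiseMDependent m (fun n : ℕ => slidingWindow ε o (n + a)) P := by
  obtain ⟨m, hm⟩ := Finite.exists_le fun p : κ × κ => (o p.1 - o p.2).toNat
  refine ⟨m, fun s t hst => indepFun_pi_of_disjoint_range hindep hmeas fun k l => ?_⟩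
  have offset_sub_le : (o k - o l).toNat ≤ m := hm (k, l)
  omega

theorem strong_law_ae_slidingWindow [Finite κ] (hindep : iIndepFun ε P)
    (hident : ∀ s t, IdentDistrib (ε s) (ε t) P P)
    {E : Type*} [NormedAddCommGroup E] [NormedSpace ℝ E] [CompleteSpace E] [MeasurableSpace E]
    [BorelSpace E] {g : (κ → S) → E} (hg : Measurable g) (a : ℤ)
    (hint : Integrable (fun ω => g (slidingWindow ε o a ω)) P) :
    ∀ᵐ ω ∂P, Tendsto
      (fun n : ℕ => (n : ℝ)⁻¹ • ∑ t ∈ Finset.range n, g (slidingWindow ε o (t + a) ω)) atTop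
      (𝓝 (∫ ω, g (slidingWindow ε o a ω) ∂P)) := by
  obtain ⟨m, hdep⟩ := exists_pairwiseMDependent_slidingWindow o hindep
    (fun t => (hident t t).aemeasurable_fst) a
  have hdep_comp : PairwiseMDependent m (fun n : ℕ => g ∘ slidingWindow ε o (n + a)) P :=
    fun s t hst => (hdep hst).comp hg hg
  simpa using hdep_comp.strong_law_ae (by simpa [Function.comp_def] using hint)
    fun t => (identDistrib_slidingWindow o hindep hident _ _).comp hg

theorem tendsto_frequency_slidingWindow_ae [Finite κ] (hindep : iIndepFun ε P)
    (hident : ∀ s t, IdentDistrib (ε s) (ε t) P P) {A : Set (κ → S)} (hA : MeasurableSet A)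
    (a b : ℤ) :
    ∀ᵐ ω ∂P, Tendsto
      (fun n : ℕ => (n : ℝ)⁻¹ * ∑ t ∈ Finset.range n,
        A.indicator (fun _ => (1 : ℝ)) (slidingWindow ε o (t + a) ω)) atTop
      (𝓝 (P.real {ω | slidingWindow ε o b ω ∈ A})) := by
  have := hindep.isProbabilityMeasure
  have hlaw := identDistrib_slidingWindow o hindep hident a b
  have hA_null : NullMeasurableSet {ω | slidingWindow ε o a ω ∈ A} P :=
    hlaw.aemeasurable_fst.nullMeasurable hA
  have hmean : ∫ ω, A.indicator (fun _ => (1 : ℝ)) (slidingWindow ε o a ω) ∂P =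
      P.real {ω | slidingWindow ε o b ω ∈ A} := by
    calc ∫ ω, A.indicator (fun _ => (1 : ℝ)) (slidingWindow ε o a ω) ∂P
        = ∫ _ in {ω | slidingWindow ε o a ω ∈ A}, (1 : ℝ) ∂P := integral_indicator₀ hA_null
      _ = P.real {ω | slidingWindow ε o a ω ∈ A} := by rw [setIntegral_const, smul_eq_mul, mul_one]
      _ = P.real {ω | slidingWindow ε o b ω ∈ A} := congrArg ENNReal.toReal (hlaw.measure_mem_eq hA)
  rw [← hmean]
  refine strong_law_ae_slidingWindow o hindep hident (measurable_const.indicator hA) a ?_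
  exact (integrable_const (1 : ℝ)).indicator₀ hA_null

end SlidingWindow

section MovingAverage

variable {Ω : Type*} [MeasurableSpace Ω] {P : Measure Ω}
  {ε X : ℤ → Ω → ℝ} {q : ℕ} {θ : ℕ → ℝ} {h : ℤ} {ξi ξj : ℝ} {Ghat : ℕ → Ω → ℝ}

lemma aemeasurable_movingAverage (hε : ∀ t, AEMeasurable (ε t) P)
    (hX : ∀ t ω, X t ω = ∑ j ∈ Finset.range (q + 1), θ j * ε (t - j) ω) (t : ℤ) :
    AEMeasurable (X t) P := by
  rw [funext (hX t)]
  fun_prop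

lemma aemeasurable_empiricalJointProb (hX : ∀ t, AEMeasurable (X t) P)
    (hGhat : ∀ n ω, Ghat n ω = (n : ℝ)⁻¹ *
      ∑ t ∈ Finset.range n,
        (if X (t + 1) ω ≤ ξi then (1 : ℝ) else 0) *
        (if X (t + 1 + h) ω ≤ ξj then (1 : ℝ) else 0)) (n : ℕ) :
    AEMeasurable (Ghat n) P := by
  have hle (t : ℤ) (ξ : ℝ) : AEMeasurable (fun ω => if X t ω ≤ ξ then (1 : ℝ) else 0) P :=
    (Measurable.ite measurableSet_Iic measurable_const measurable_const).comp_aemeasurable (hX t)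
  rw [funext (hGhat n)]
  fun_prop

theorem sma_empirical_joint_prob_consistent_general
    (hindep : iIndepFun ε P) (hident : ∀ t, IdentDistrib (ε t) (ε 0) P P)
    (hX : ∀ t ω, X t ω = ∑ j ∈ Finset.range (q + 1), θ j * ε (t - j) ω)
    (hGhat : ∀ n ω, Ghat n ω = (n : ℝ)⁻¹ *
      ∑ t ∈ Finset.range n,
        (if X (t + 1) ω ≤ ξi then (1 : ℝ) else 0) *
        (if X (t + 1 + h) ω ≤ ξj then (1 : ℝ) else 0)) :
    ∀ᵐ ω ∂P, Tendsto (fun n => Ghat n ω) atTop (𝓝 (P.real {ω | X 0 ω ≤ ξi ∧ X h ω ≤ ξj})) := by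
  let offset : Fin (q + 1) ⊕ Fin (q + 1) → ℤ := Sum.elim (fun j => -j) (fun j => h - j)
  let A : Set (Fin (q + 1) ⊕ Fin (q + 1) → ℝ) :=
    {v | ∑ j : Fin (q + 1), θ j * v (.inl j) ≤ ξi ∧ ∑ j : Fin (q + 1), θ j * v (.inr j) ≤ ξj}
  have hsum (index : Fin (q + 1) → Fin (q + 1) ⊕ Fin (q + 1)) :
      Measurable fun v : Fin (q + 1) ⊕ Fin (q + 1) → ℝ =>
        ∑ j : Fin (q + 1), θ j * v (index j) := by
    fun_prop
  have hA : MeasurableSet A :=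
    (measurableSet_le (hsum .inl) measurable_const).inter
      (measurableSet_le (hsum .inr) measurable_const)
  have mem_A_iff (t : ℤ) (ω : Ω) :
      slidingWindow ε offset t ω ∈ A ↔ X t ω ≤ ξi ∧ X (t + h) ω ≤ ξj := by
    simp only [A, offset, slidingWindow, Set.mem_ofPred_eq, Sum.elim_inl, Sum.elim_inr, hX,
      Finset.sum_range, ← sub_eq_add_neg, add_sub_assoc]
  have indicator_A (t : ℤ) (ω : Ω) :
      A.indicator (fun _ => (1 : ℝ)) (slidingWindow ε offset t ω) =
        (if X t ω ≤ ξi then (1 : ℝ) else 0) * (if X (t + h) ω ≤ ξj then (1 : ℝ) else 0) := by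
    classical
    simp only [Set.indicator_apply, mem_A_iff, ite_and, ite_mul, one_mul, zero_mul]
  simpa only [indicator_A, mem_A_iff, ← hGhat, zero_add] using
    tendsto_frequency_slidingWindow_ae offset hindep
      (fun s t => (hident s).trans (hident t).symm) hA 1 0

end MovingAverage

/-- Consistency of the empirical lag-`h` joint probability
`Ĝ_{h,n} = (1/n) Σ_{t=1}^{n} 1{X_t ≤ ξᵢ} 1{X_{t+h} ≤ ξⱼ}` for a moving-average
process: `Ĝ_{h,n} → G_h(ξᵢ, ξⱼ)` in probability. -/
theorem sma_empirical_joint_prob_consistent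
    {Ω : Type*} [MeasurableSpace Ω] (P : Measure Ω) [IsProbabilityMeasure P]
    (ε : ℤ → Ω → ℝ) (hmeas : ∀ t, Measurable (ε t))
    (hindep : iIndepFun ε P)
    (hident : ∀ t, IdentDistrib (ε t) (ε 0) P P)
    (q : ℕ) (θ : ℕ → ℝ)
    (X : ℤ → Ω → ℝ)
    (hX : ∀ t ω, X t ω = ∑ j ∈ Finset.range (q + 1), θ j * ε (t - j) ω)
    (h : ℤ) (hh : 0 ≤ h) (ξi ξj : ℝ)
    (G : ℝ) (hG : G = (P {ω | X 0 ω ≤ ξi ∧ X h ω ≤ ξj}).toReal)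
    (Ghat : ℕ → Ω → ℝ)
    (hGhat : ∀ n ω, Ghat n ω = (n : ℝ)⁻¹ *
      ∑ t ∈ Finset.range n,
        (if X (t + 1) ω ≤ ξi then (1 : ℝ) else 0) *
        (if X (t + 1 + h) ω ≤ ξj then (1 : ℝ) else 0)) :
    ∀ e : ℝ, 0 < e →
      Tendsto (fun n => P {ω | e < |Ghat n ω - G|}) atTop (𝓝 0) := by
  intro e he
  rw [hG]
  exact tendsto_measure_lt_abs_sub_of_tendsto_ae
    (aemeasurable_empiricalJointProb
      (aemeasurable_movingAverage (fun t => (hmeas t).aemeasurable) hX) hGhat)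
    (sma_empirical_joint_prob_consistent_general hindep hident hX hGhat) he
end
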